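/- Let d = 2κ be even and let γ_d¹, …, γ_d^{d+1} be the Dirac matrices of size 2^κ given by the recursive construction. Then for any vectors z₁, …, z_d ∈ ℝ^d, trace( γ_d^{d+1} · ∏_{j=1}^{d} ( Σ_{l=1}^{d} z_{j,l} γ_d^l ) ) = (2i)^{d/2} · det(z₁, …, z_d), where det(z₁,…,z_d) is the determinant of the d×d matrix with rows z₁,…,z_d and the product is taken in the order j = 1, …, d. -/

import Mathlib

open Matrix

/-- Pauli matrix σ₁. -/
noncomputable def pauli1 : Matrix (Fin 2) (Fin 2) ℂ := !![0, 1; 1, 0]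

/-- Pauli matrix σ₂. -/
noncomputable def pauli2 : Matrix (Fin 2) (Fin 2) ℂ := !![0, -Complex.I; Complex.I, 0]

/-- Pauli matrix σ₃. -/
noncomputable def pauli3 : Matrix (Fin 2) (Fin 2) ℂ := !![1, 0; 0, -1]

/-- Re-index a square matrix along an equality of dimensions. -/
noncomputable def castSq {m n : ℕ} (h : m = n) (A : Matrix (Fin m) (Fin m) ℂ) :
    Matrix (Fin n) (Fin n) ℂ :=
  Matrix.reindex (finCongr h) (finCongr h) A

/-- Kronecker product of a 2×2 matrix with an n×n matrix, with indices flattened. -/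
noncomputable def kron2 {n : ℕ} (A : Matrix (Fin 2) (Fin 2) ℂ) (B : Matrix (Fin n) (Fin n) ℂ) :
    Matrix (Fin (2 * n)) (Fin (2 * n)) ℂ :=
  Matrix.reindex finProdFinEquiv finProdFinEquiv (Matrix.kroneckerMap (· * ·) A B)

/-- The recursively constructed Dirac matrices: `diracGamma κ j` is the `j`-th Dirac matrix
(1-indexed, `1 ≤ j ≤ 2κ+1`) of size `2^κ`. For κ = 1 these are the Pauli matrices; the
recursion is `γ_{d+2}^j = σ₁ ⊗ γ_d^j` (`1 ≤ j ≤ d+1`), `γ_{d+2}^{d+2} = σ₂ ⊗ I`,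
`γ_{d+2}^{d+3} = σ₃ ⊗ I` for `d = 2κ`. -/
noncomputable def diracGamma : (κ : ℕ) → ℕ → Matrix (Fin (2 ^ κ)) (Fin (2 ^ κ)) ℂ
  | 0, _ => 1
  | 1, j => castSq (by norm_num)
      (if j = 1 then pauli1 else if j = 2 then pauli2 else if j = 3 then pauli3 else 1)
  | (κ + 2), j => castSq (by rw [pow_succ]; ring)
      (if j ≤ 2 * (κ + 1) + 1 then kron2 pauli1 (diracGamma (κ + 1) j)
       else if j = 2 * (κ + 1) + 2 then kron2 pauli2 1
       else if j = 2 * (κ + 1) + 3 then kron2 pauli3 1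
       else 1)

/-!
Expanding the product multilinearly gives a sum over all maps `r : {1, …, d} → {1, …, d}` of
`(∏ j, z j (r j)) • tr (γ^{d+1} γ^{r 1} ⋯ γ^{r d})`. If `r` misses an index `m`, then `γ^m`
anticommutes with each of the `d + 1` factors, hence with their product since `d + 1` is odd;
conjugating by `γ^m` and using the cyclicity of the trace shows that the term equals its own
negative. If `r` is a permutation, sorting the factors produces its sign. What remains is the
Leibniz formula for the determinant, times `tr (γ^{d+1} γ^1 ⋯ γ^d)`, which is computed from the
recursion: `γ^1 ⋯ γ^{d+1} = i^{d/2}`, because `σ₁ σ₂ σ₃ = i`.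
-/

section MultilinearExpansion

variable {ι R N M : Type*} [Fintype ι] [DecidableEq ι] [CommRing R] [AddCommMonoid N] [Module R N]
  [AddCommGroup M] [Module R M]

theorem multilinearMap_sum_smul_eq_det_smul (f : MultilinearMap R (fun _ : ι => N) M) (v : ι → N)
    (hzero : ∀ r : ι → ι, ¬ Function.Surjective r → f (v ∘ r) = 0)
    (hsign : ∀ σ : Equiv.Perm ι, f (v ∘ σ) = Equiv.Perm.sign σ • f v) (z : Matrix ι ι R) :
    f (fun j => ∑ l, z j l • v l) = z.det • f v := by
  have expand : f (fun j => ∑ l, z j l • v l) = ∑ r : ι → ι, (∏ j, z j (r j)) • f (v ∘ r) := by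
    simp only [f.map_sum, f.map_smul_univ, Function.comp_def]
  have restrict : ∑ r : ι → ι, (∏ j, z j (r j)) • f (v ∘ r) =
      ∑ σ : Equiv.Perm ι, (∏ j, z j (σ j)) • f (v ∘ σ) := by
    refine (Finset.sum_of_injOn (fun σ : Equiv.Perm ι => (σ : ι → ι))
      Equiv.coe_fn_injective.injOn (by simp) (fun r _ hr => ?_) (fun _ _ => rfl)).symm
    rw [hzero r, smul_zero]
    intro hsurj
    exact hr ⟨Equiv.ofBijective r (Finite.surjective_iff_bijective.mp hsurj), by simp, rfl⟩
  rw [expand, restrict, ← Matrix.det_transpose, Matrix.det_apply, Finset.sum_smul]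
  refine Finset.sum_congr rfl fun σ _ => ?_
  rw [hsign, smul_comm, smul_assoc]
  rfl

end MultilinearExpansion

section AnticommutingProducts

variable {A : Type*} [Ring A]

theorem mul_list_prod_of_anticommute (x : A) (L : List A) (h : ∀ y ∈ L, x * y = -(y * x)) :
    x * L.prod = (-1 : ℤ) ^ L.length • (L.prod * x) := by
  induction L with
  | nil => simp
  | cons a L ih =>
    obtain ⟨ha, hL⟩ := List.forall_mem_cons.mp h
    calc x * (a :: L).prod = -(a * (x * L.prod)) := by
          rw [List.prod_cons, ← mul_assoc, ha, neg_mul, mul_assoc]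
      _ = (-1 : ℤ) ^ (a :: L).length • ((a :: L).prod * x) := by
          rw [ih hL, mul_smul_comm, List.length_cons, pow_succ', neg_one_mul, neg_smul,
            List.prod_cons, mul_assoc]

theorem prod_ofFn_comp_swap_of_anticommute {n : ℕ} (e : Fin (n + 1) → A)
    (he : Pairwise fun i j => e i * e j = -(e j * e i)) (i : Fin n) :
    (List.ofFn (e ∘ Equiv.swap i.castSucc i.succ)).prod = -(List.ofFn e).prod := by
  induction n with
  | zero => exact i.elim0
  | succ n ih =>
    cases i using Fin.cases with
    | zero =>
      have fixed (k : Fin n) : Equiv.swap (0 : Fin (n + 2)) 1 k.succ.succ = k.succ.succ :=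
        Equiv.swap_apply_of_ne_of_ne (Fin.succ_ne_zero _) (Fin.succ_succ_ne_one k)
      have h10 : e 1 * e 0 = -(e 0 * e 1) := he (Fin.zero_ne_one).symm
      simp [List.ofFn_succ, fixed, ← mul_assoc, h10]
    | succ i =>
      have swap_zero : Equiv.swap i.succ.castSucc i.succ.succ 0 = 0 :=
        Equiv.swap_apply_of_ne_of_ne (Fin.succ_ne_zero i.castSucc).symm (Fin.succ_ne_zero _).symm
      have swap_succ (k : Fin (n + 1)) : Equiv.swap i.succ.castSucc i.succ.succ k.succ =
          (Equiv.swap i.castSucc i.succ k).succ :=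
        (Fin.succ_injective _).swap_apply i.castSucc i.succ k
      have ih_tail := ih (e ∘ Fin.succ) (he.comp_of_injective (Fin.succ_injective _)) i
      simp only [List.ofFn_succ, List.prod_cons, Function.comp_def, swap_zero, swap_succ]
        at ih_tail ⊢
      rw [ih_tail, mul_neg]

theorem prod_ofFn_comp_perm_of_anticommute {n : ℕ} (e : Fin n → A)
    (he : Pairwise fun i j => e i * e j = -(e j * e i)) (σ : Equiv.Perm (Fin n)) :
    (List.ofFn (e ∘ σ)).prod = Equiv.Perm.sign σ • (List.ofFn e).prod := by
  cases n with
  | zero => simp [Subsingleton.elim σ 1]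
  | succ n =>
    have hσ : σ ∈ Submonoid.closure (Set.range fun i : Fin n => Equiv.swap i.castSucc i.succ) :=
      Equiv.Perm.mclosure_swap_castSucc_succ n ▸ Submonoid.mem_top σ
    induction hσ using Submonoid.closure_induction generalizing e with
    | mem _ hswap =>
      obtain ⟨i, rfl⟩ := hswap
      rw [prod_ofFn_comp_swap_of_anticommute e he, Equiv.Perm.sign_swap Fin.castSucc_lt_succ.ne,
        Units.neg_smul, one_smul]
    | one => simp
    | mul σ τ _ _ ihσ ihτ =>
      rw [Equiv.Perm.coe_mul, ← Function.comp_assoc,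
        ihτ (e ∘ σ) (he.comp_of_injective σ.injective), ihσ e he, smul_smul, Equiv.Perm.sign_mul,
        mul_comm]

end AnticommutingProducts

section TracialMaps

variable {A M : Type*} [Ring A] [AddCommGroup M] [IsAddTorsionFree M]

theorem tracial_map_eq_zero_of_anticommute (τ : A →+ M) (hτ : ∀ a b, τ (a * b) = τ (b * a))
    {x a : A} (hx : x * x = 1) (hxa : x * a = -(a * x)) : τ a = 0 := by
  refine self_eq_neg.mp ?_
  calc τ a = τ (x * a * x) := by rw [hτ, ← mul_assoc, hx, one_mul]
    _ = -τ a := by rw [hxa, neg_mul, mul_assoc, hx, mul_one, map_neg]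

theorem tracial_map_mul_prod_sum_smul {R : Type*} [CommRing R] [Algebra R A] [Module R M]
    (τ : A →ₗ[R] M) (hτ : ∀ a b, τ (a * b) = τ (b * a)) {n : ℕ} (hn : Even n) (g : A)
    (e : Fin n → A) (he : Pairwise fun i j => e i * e j = -(e j * e i))
    (hsq : ∀ i, e i * e i = 1) (hg : ∀ i, e i * g = -(g * e i)) (z : Matrix (Fin n) (Fin n) R) :
    τ (g * (List.ofFn fun j => ∑ l, z j l • e l).prod) = z.det • τ (g * (List.ofFn e).prod) := by
  let f : MultilinearMap R (fun _ : Fin n => A) M :=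
    (τ ∘ₗ LinearMap.mulLeft R g).compMultilinearMap (MultilinearMap.mkPiAlgebraFin R n A)
  refine multilinearMap_sum_smul_eq_det_smul f e (fun r hr => ?_) (fun σ => ?_) z
  · obtain ⟨m, hm⟩ : ∃ m, ∀ j, r j ≠ m := by simpa [Function.Surjective] using hr
    refine tracial_map_eq_zero_of_anticommute τ.toAddMonoidHom hτ (hsq m) ?_
    have hodd : Odd (g :: List.ofFn (e ∘ r)).length := by simpa using hn.add_one
    have anticommute := mul_list_prod_of_anticommute (e m) (g :: List.ofFn (e ∘ r))
      (by simpa [List.mem_ofFn] using ⟨hg m, fun j => he (hm j).symm⟩)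
    rwa [hodd.neg_one_pow, neg_one_smul] at anticommute
  · change τ (g * (List.ofFn (e ∘ σ)).prod) = Equiv.Perm.sign σ • τ (g * (List.ofFn e).prod)
    rw [prod_ofFn_comp_perm_of_anticommute e he, Units.smul_def, mul_smul_comm, map_zsmul,
      ← Units.smul_def]

end TracialMaps

section PauliMatrices

theorem pauli1_mul_self : pauli1 * pauli1 = 1 := by
  simp [pauli1, one_fin_two]

theorem pauli2_mul_self : pauli2 * pauli2 = 1 := by
  simp [pauli2, one_fin_two]

theorem pauli3_mul_self : pauli3 * pauli3 = 1 := by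
  simp [pauli3, one_fin_two]

theorem pauli1_mul_pauli2 : pauli1 * pauli2 = Complex.I • pauli3 := by
  simp [pauli1, pauli2, pauli3]

theorem pauli1_anticommute_pauli2 : pauli1 * pauli2 = -(pauli2 * pauli1) := by
  simp [pauli1, pauli2]

theorem pauli1_anticommute_pauli3 : pauli1 * pauli3 = -(pauli3 * pauli1) := by
  simp [pauli1, pauli3]

theorem pauli2_anticommute_pauli3 : pauli2 * pauli3 = -(pauli3 * pauli2) := by
  simp [pauli2, pauli3]

end PauliMatrices

section FlatKronecker

open scoped Kronecker

/-- The Kronecker product of a `2 × 2` matrix and a `2^κ × 2^κ` matrix as a bilinear map, with the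
index pairs flattened to `Fin (2 ^ (κ + 1))`. It is the operation `castSq _ (kron2 A B)` by which
`diracGamma` passes from `κ` to `κ + 1`. -/
noncomputable def flatKron (κ : ℕ) : Matrix (Fin 2) (Fin 2) ℂ →ₗ[ℂ]
    Matrix (Fin (2 ^ κ)) (Fin (2 ^ κ)) ℂ →ₗ[ℂ] Matrix (Fin (2 ^ (κ + 1))) (Fin (2 ^ (κ + 1))) ℂ :=
  (kroneckerBilinear (R := ℂ) (α := ℂ)).compr₂ (reindexAlgEquiv ℂ ℂ
    (finProdFinEquiv.trans (finCongr (pow_succ' 2 κ).symm))).toLinearMap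

variable {κ : ℕ}

theorem flatKron_apply (A : Matrix (Fin 2) (Fin 2) ℂ) (B : Matrix (Fin (2 ^ κ)) (Fin (2 ^ κ)) ℂ) :
    flatKron κ A B = reindexAlgEquiv ℂ ℂ
      (finProdFinEquiv.trans (finCongr (pow_succ' 2 κ).symm)) (A ⊗ₖ B) :=
  rfl

theorem castSq_kron2 (h : 2 * 2 ^ κ = 2 ^ (κ + 1)) (A : Matrix (Fin 2) (Fin 2) ℂ)
    (B : Matrix (Fin (2 ^ κ)) (Fin (2 ^ κ)) ℂ) : castSq h (kron2 A B) = flatKron κ A B :=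
  rfl

theorem castSq_eq_flatKron_zero (h : 2 = 2 ^ (0 + 1)) (A : Matrix (Fin 2) (Fin 2) ℂ) :
    castSq h A = flatKron 0 A 1 := by
  rw [flatKron_apply]
  ext a b
  fin_cases a <;> fin_cases b <;> simp [castSq, finProdFinEquiv, Fin.divNat, Fin.modNat]

theorem flatKron_mul_flatKron (A A' : Matrix (Fin 2) (Fin 2) ℂ)
    (B B' : Matrix (Fin (2 ^ κ)) (Fin (2 ^ κ)) ℂ) :
    flatKron κ A B * flatKron κ A' B' = flatKron κ (A * A') (B * B') := by
  simp only [flatKron_apply, mul_kronecker_mul, map_mul]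

theorem flatKron_one_one (κ : ℕ) : flatKron κ 1 1 = 1 := by
  rw [flatKron_apply, one_kronecker_one, map_one]

theorem prod_ofFn_flatKron (A : Matrix (Fin 2) (Fin 2) ℂ) {n : ℕ}
    (B : Fin n → Matrix (Fin (2 ^ κ)) (Fin (2 ^ κ)) ℂ) :
    (List.ofFn fun i => flatKron κ A (B i)).prod = flatKron κ (A ^ n) (List.ofFn B).prod := by
  induction n with
  | zero => simp [flatKron_one_one]
  | succ n ih =>
    rw [List.ofFn_succ, List.prod_cons, ih, flatKron_mul_flatKron, ← pow_succ' A, List.ofFn_succ,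
      List.prod_cons]

end FlatKronecker

section DiracMatrices

variable {κ i j : ℕ}

-- The convention `diracGamma 0 _ = 1` makes the recursion valid from `κ = 0` on: it turns the
-- Pauli matrices into the first step.
theorem diracGamma_succ_of_le (hi : i ≤ 2 * κ) :
    diracGamma (κ + 1) (i + 1) = flatKron κ pauli1 (diracGamma κ (i + 1)) := by
  cases κ with
  | zero =>
    obtain rfl : i = 0 := by omega
    simp [diracGamma, castSq_eq_flatKron_zero]
  | succ κ => rw [diracGamma, if_pos (by omega), castSq_kron2]

theorem diracGamma_succ_penultimate : diracGamma (κ + 1) (2 * κ + 2) = flatKron κ pauli2 1 := by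
  cases κ with
  | zero => simp [diracGamma, castSq_eq_flatKron_zero]
  | succ κ => rw [diracGamma, if_neg (by omega), if_pos rfl, castSq_kron2]

theorem diracGamma_succ_last : diracGamma (κ + 1) (2 * κ + 3) = flatKron κ pauli3 1 := by
  cases κ with
  | zero => simp [diracGamma, castSq_eq_flatKron_zero]
  | succ κ => rw [diracGamma, if_neg (by omega), if_neg (by omega), if_pos rfl, castSq_kron2]

theorem diracGamma_mul_self (hi : i ≤ 2 * κ) :
    diracGamma κ (i + 1) * diracGamma κ (i + 1) = 1 := by
  induction κ with
  | zero => simp [diracGamma]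
  | succ κ ih =>
    obtain hi | rfl | rfl : i ≤ 2 * κ ∨ i = 2 * κ + 1 ∨ i = 2 * κ + 2 := by omega
    · rw [diracGamma_succ_of_le hi, flatKron_mul_flatKron, pauli1_mul_self, ih hi,
        flatKron_one_one]
    · rw [diracGamma_succ_penultimate, flatKron_mul_flatKron, pauli2_mul_self, one_mul,
        flatKron_one_one]
    · rw [diracGamma_succ_last, flatKron_mul_flatKron, pauli3_mul_self, one_mul, flatKron_one_one]

theorem diracGamma_anticommute_of_lt (hij : i < j) (hj : j ≤ 2 * κ) :
    diracGamma κ (i + 1) * diracGamma κ (j + 1) =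
      -(diracGamma κ (j + 1) * diracGamma κ (i + 1)) := by
  induction κ with
  | zero => omega
  | succ κ ih =>
    obtain hj | rfl | rfl : j ≤ 2 * κ ∨ j = 2 * κ + 1 ∨ j = 2 * κ + 2 := by omega
    · simp only [diracGamma_succ_of_le hj, diracGamma_succ_of_le (hij.le.trans hj),
        flatKron_mul_flatKron, ih hj, map_neg]
    · simp only [diracGamma_succ_penultimate, diracGamma_succ_of_le (Nat.le_of_lt_succ hij),
        flatKron_mul_flatKron, pauli1_anticommute_pauli2, map_neg, LinearMap.neg_apply, one_mul,
        mul_one]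
    · obtain hi | rfl : i ≤ 2 * κ ∨ i = 2 * κ + 1 := by omega
      · simp only [diracGamma_succ_last, diracGamma_succ_of_le hi, flatKron_mul_flatKron,
          pauli1_anticommute_pauli3, map_neg, LinearMap.neg_apply, one_mul, mul_one]
      · simp only [diracGamma_succ_last, diracGamma_succ_penultimate, flatKron_mul_flatKron,
          pauli2_anticommute_pauli3, map_neg, LinearMap.neg_apply]

theorem diracGamma_anticommute (hij : i ≠ j) (hi : i ≤ 2 * κ) (hj : j ≤ 2 * κ) :
    diracGamma κ (i + 1) * diracGamma κ (j + 1) =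
      -(diracGamma κ (j + 1) * diracGamma κ (i + 1)) := by
  obtain hlt | hgt := hij.lt_or_gt
  · exact diracGamma_anticommute_of_lt hlt hj
  · rw [diracGamma_anticommute_of_lt hgt hi, neg_neg]

theorem prod_ofFn_diracGamma (κ : ℕ) :
    (List.ofFn fun i : Fin (2 * κ + 1) => diracGamma κ (i + 1)).prod = Complex.I ^ κ • 1 := by
  induction κ with
  | zero => simp [diracGamma]
  | succ κ ih =>
    have lower : (List.ofFn fun i : Fin (2 * κ + 1) => diracGamma (κ + 1) (i + 1)).prod =
        Complex.I ^ κ • flatKron κ pauli1 1 := by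
      have pauli1_pow : pauli1 ^ (2 * κ + 1) = pauli1 := by
        rw [pow_succ, pow_mul, sq, pauli1_mul_self, one_pow, one_mul]
      simp only [diracGamma_succ_of_le (Fin.is_le _), prod_ofFn_flatKron, pauli1_pow, ih, map_smul]
    have top : flatKron κ pauli1 1 * flatKron κ pauli2 1 * flatKron κ pauli3 1 = Complex.I • 1 := by
      simp only [flatKron_mul_flatKron, pauli1_mul_pauli2, smul_mul_assoc, pauli3_mul_self,
        mul_one, map_smul, LinearMap.smul_apply, flatKron_one_one]
    calc (List.ofFn fun i : Fin (2 * κ + 1 + 1 + 1) => diracGamma (κ + 1) (i + 1)).prod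
        = (List.ofFn fun i : Fin (2 * κ + 1) => diracGamma (κ + 1) (i + 1)).prod *
            diracGamma (κ + 1) (2 * κ + 2) * diracGamma (κ + 1) (2 * κ + 3) := by
          simp only [List.ofFn_succ', List.concat_eq_append, List.prod_append, List.prod_singleton,
            Fin.val_castSucc, Fin.val_last]
      _ = Complex.I ^ (κ + 1) • 1 := by
          rw [lower, diracGamma_succ_penultimate, diracGamma_succ_last, smul_mul_assoc,
            smul_mul_assoc, top, smul_smul, ← pow_succ]

theorem trace_diracGamma_last_mul_prod (κ : ℕ) :
    trace (diracGamma κ (2 * κ + 1) *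
      (List.ofFn fun j : Fin (2 * κ) => diracGamma κ (j + 1)).prod) = (2 * Complex.I) ^ κ := by
  have hprod := prod_ofFn_diracGamma κ
  simp only [List.ofFn_succ', List.concat_eq_append, List.prod_append, List.prod_singleton,
    Fin.val_castSucc, Fin.val_last] at hprod
  rw [trace_mul_comm, hprod, trace_smul, trace_one, Fintype.card_fin, smul_eq_mul, mul_pow,
    mul_comm, Nat.cast_pow, Nat.cast_ofNat]

end DiracMatrices

theorem trace_dirac_det_general (κ : ℕ) (z : Matrix (Fin (2 * κ)) (Fin (2 * κ)) ℂ) :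
    trace (diracGamma κ (2 * κ + 1) *
        (List.ofFn fun j => ∑ l : Fin (2 * κ), z j l • diracGamma κ (l + 1)).prod)
      = (2 * Complex.I) ^ κ * z.det := by
  have expand := tracial_map_mul_prod_sum_smul (traceLinearMap (Fin (2 ^ κ)) ℂ ℂ) trace_mul_comm
    (even_two_mul κ) (diracGamma κ (2 * κ + 1)) (fun l : Fin (2 * κ) => diracGamma κ (l + 1))
    (fun i j hij => diracGamma_anticommute (Fin.val_ne_of_ne hij) i.is_lt.le j.is_lt.le)
    (fun i => diracGamma_mul_self i.is_lt.le)
    (fun i => diracGamma_anticommute_of_lt i.is_lt le_rfl) z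
  simpa only [traceLinearMap_apply, trace_diracGamma_last_mul_prod, smul_eq_mul, mul_comm z.det]
    using expand

/-- For even `d = 2κ` and vectors `z₁, …, z_d ∈ ℝ^d`:
`trace(γ^{d+1} ∏ⱼ (Σₗ z_{j,l} γ^l)) = (2i)^{d/2} det(z₁,…,z_d)`. -/
theorem trace_dirac_det (κ : ℕ) (hκ : 1 ≤ κ) (z : Fin (2 * κ) → Fin (2 * κ) → ℝ) :
    Matrix.trace (diracGamma κ (2 * κ + 1) *
        (List.ofFn fun j : Fin (2 * κ) =>
          ∑ l : Fin (2 * κ), ((z j l : ℝ) : ℂ) • diracGamma κ ((l : ℕ) + 1)).prod)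
      = (2 * Complex.I) ^ κ * ((Matrix.det (Matrix.of z) : ℝ) : ℂ) := by
  rw [← Complex.ofRealHom_eq_coe, RingHom.map_det]
  exact trace_dirac_det_general κ (Complex.ofRealHom.mapMatrix (of z))
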